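/- Let n ≥ 2, let μ ≥ 0 with 2μ = n−2, let α > 0, set C_μ = (n + (n−2)²/4)·α, and let φ = φ_μ. Then the function β := β_φ is bounded on (0,∞), and the function γ : (0,∞) → ℝ defined pointwise by solving (ODE2) for γ (with this β and φ) is bounded on (0,∞). Moreover, for an arbitrary choice of C_μ ≥ 0 there exists a bounded function R on (3/2,∞) such that β_φ(r) = (−C_μ + α(n + (n−2)²/4)) log r + R(r) for all r > 3/2. -/

import Mathlib

/-!
Put `w = r^{n-2} φ²`, `P = r φ'/φ`, `Q = r² φ''/φ`. On `(1,∞)` we have `w = (1 + C/r²)²`, because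
`2μ = n - 2`, and all three integrals in `β_φ` have elementary primitives. The quadratic terms of
`r² w / 4` and of the first integral cancel, and what is left is `w β = K log r + O(1)` with
`K = -C + α (n + μ²)`; since `(w - 1) log r` is bounded, `β = K log r + O(1)` (`beta_far`).
Near `0`, `β` is the polynomial `n r² / (4 (n + 2)) + α / n` (`beta_near`). Hence `β` is bounded on
`(0,∞)` when `K = 0`.

For `γ`, differentiating `w β` eliminates the integrals: `r β'` is a polynomial in `β`, `P`, `Q` and
`r² (n - 2 + 2P)` (`hasDerivAt_beta`), and `γ` is a polynomial in `β`, `P`, `Q`, `r β'` (`gamma_eq`).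
The functions `P`, `Q` and `r² (n - 2 + 2P)` are continuous on `(0,∞)`, and bounded near `0` and
near `∞` by explicit formulas, so `γ` is bounded.
-/


open MeasureTheory
open scoped BigOperators

noncomputable section

/-- `φ_μ`: positive and smooth on `(0,∞)`, equal to `r` for `0 < r < 3/4`, and equal to
`r^{-μ} + C_μ r^{-μ-2}` for `r > 1`. -/
def IsPhiMu (μ Cμ : ℝ) (φ : ℝ → ℝ) : Prop :=
  (∀ r > 0, 0 < φ r) ∧ ContDiffOn ℝ (⊤ : ℕ∞) φ (Set.Ioi 0) ∧
  (∀ r ∈ Set.Ioo (0 : ℝ) (3 / 4), φ r = r) ∧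
  (∀ r > (1 : ℝ), φ r = r ^ (-μ) + Cμ * r ^ (-μ - 2))

/-- The explicit solution `β_φ` of (ODE1). -/
def betaPhi (n : ℕ) (μ α : ℝ) (φ : ℝ → ℝ) (r : ℝ) : ℝ :=
  (1 / 4) * (r ^ 2 + (2 * μ - n) * (r ^ ((n : ℝ) - 2) * (φ r) ^ 2)⁻¹ *
      ∫ s in Set.Ioc (0 : ℝ) r, (φ s) ^ 2 * s ^ ((n : ℝ) - 1)) +
  n * α * (r ^ ((n : ℝ) - 2) * (φ r) ^ 2)⁻¹ *
      (∫ s in Set.Ioc (0 : ℝ) r, (φ s) ^ 2 * s ^ ((n : ℝ) - 3)) +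
  α * (r ^ ((n : ℝ) - 2) * (φ r) ^ 2)⁻¹ *
      (∫ s in Set.Ioc (0 : ℝ) r, (deriv φ s) ^ 2 * s ^ ((n : ℝ) - 1)) -
  α * r * deriv φ r / φ r

/-- The function `γ` obtained by solving (ODE2) pointwise, given `φ` and `β`. -/
def gammaOf (n : ℕ) (α : ℝ) (φ β : ℝ → ℝ) (r : ℝ) : ℝ :=
  r ^ 2 / (((n : ℝ) - 1) * φ r) *
    (-α * deriv (fun s => s ^ ((n : ℝ) - 2) * (φ s) ^ 2) r / (r ^ ((n : ℝ) - 1) * φ r) +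
      deriv (fun s => s ^ ((n : ℝ) - 1) * β s * deriv φ s) r / r ^ ((n : ℝ) - 1) -
      β r * φ r / r ^ 2)

/-! ### Primitives based at `0` and boundedness on `(0,∞)` -/

/-- A function that is continuous on `(0,∞)` and is a nonnegative power near `0` is integrable at `0`,
so its primitive based at `0` is differentiable on `(0,∞)`. -/
lemma primitive_facts (f : ℝ → ℝ) (a : ℝ) (ha : 0 ≤ a) (hf : ContinuousOn f (Set.Ioi 0))
    (hfa : ∀ s ∈ Set.Ioo (0 : ℝ) (3 / 4), f s = s ^ a) :
    (∀ r ∈ Set.Ioo (0 : ℝ) (3 / 4), ∫ s in Set.Ioc (0 : ℝ) r, f s = r ^ (a + 1) / (a + 1)) ∧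
    (∀ r > 0, HasDerivAt (fun r => ∫ s in Set.Ioc (0 : ℝ) r, f s) (f r) r) := by
  have hpow : ∀ r ∈ Set.Ioo (0 : ℝ) (3 / 4), Set.EqOn (fun s => s ^ a) f (Set.uIoc 0 r) := by
    intro r hr s hs
    rw [Set.uIoc_of_le hr.1.le] at hs
    exact (hfa s ⟨hs.1, hs.2.trans_lt hr.2⟩).symm
  have hint : ∀ r > 0, IntervalIntegrable f volume 0 r := by
    intro r hr
    have h1 : IntervalIntegrable f volume 0 (1 / 2) :=
      (intervalIntegral.intervalIntegrable_rpow' (by linarith)).congr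
        (hpow (1 / 2) ⟨by norm_num, by norm_num⟩)
    refine h1.trans (ContinuousOn.intervalIntegrable (hf.mono ?_))
    intro s hs
    have := hs.1
    have h2 : (0 : ℝ) < min (1 / 2) r := lt_min (by norm_num) hr
    exact h2.trans_le this
  constructor
  · intro r hr
    rw [← intervalIntegral.integral_of_le hr.1.le,
      ← intervalIntegral.integral_congr_ae (Filter.Eventually.of_forall (hpow r hr)),
      integral_rpow (Or.inl (by linarith)), Real.zero_rpow (by linarith), sub_zero]
  · intro r hr
    have h1 : HasDerivAt (fun r => ∫ s in (0 : ℝ)..r, f s) (f r) r :=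
      intervalIntegral.integral_hasDerivAt_right (hint r hr)
        (hf.stronglyMeasurableAtFilter isOpen_Ioi r hr) (hf.continuousAt (Ioi_mem_nhds hr))
    refine h1.congr_of_eventuallyEq ?_
    filter_upwards [Ioi_mem_nhds hr] with s hs
    exact (intervalIntegral.integral_of_le (le_of_lt hs)).symm

/-- A function continuous on `(0,∞)` and bounded near `0` and near `∞` is bounded on `(0,∞)`. -/
lemma bounded_of_ends (f : ℝ → ℝ) (hf : ContinuousOn f (Set.Ioi 0))
    (h0 : ∃ M, ∀ r ∈ Set.Ioo (0 : ℝ) (3 / 4), |f r| ≤ M)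
    (h1 : ∃ M, ∀ r > (3 / 2 : ℝ), |f r| ≤ M) : ∃ M, ∀ r > (0 : ℝ), |f r| ≤ M := by
  obtain ⟨M0, h0⟩ := h0
  obtain ⟨M1, h1⟩ := h1
  obtain ⟨M2, h2⟩ := (isCompact_Icc (a := (3 / 4 : ℝ)) (b := 3 / 2)).exists_bound_of_continuousOn
    (hf.mono (fun s hs => lt_of_lt_of_le (by norm_num) hs.1))
  refine ⟨max M0 (max M1 M2), fun r hr => ?_⟩
  rcases lt_or_ge r (3 / 4) with h | h
  · exact (h0 r ⟨hr, h⟩).trans (le_max_left _ _)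
  rcases lt_or_ge (3 / 2) r with h' | h'
  · exact (h1 r h').trans ((le_max_left _ _).trans (le_max_right _ _))
  · exact (h2 r ⟨h, h'⟩).trans ((le_max_right _ _).trans (le_max_right _ _))

/-! ### The profile `φ_μ` and its logarithmic derivatives -/

section
variable {μ C : ℝ} {φ : ℝ → ℝ}

lemma IsPhiMu.hasDerivAt (h : IsPhiMu μ C φ) {r : ℝ} (hr : 0 < r) :
    HasDerivAt φ (deriv φ r) r :=
  ((h.2.1.differentiableOn (by simp)).differentiableAt (Ioi_mem_nhds hr)).hasDerivAt

lemma IsPhiMu.contDiffOn_deriv (h : IsPhiMu μ C φ) :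
    ContDiffOn ℝ (⊤ : ℕ∞) (deriv φ) (Set.Ioi 0) :=
  h.2.1.deriv_of_isOpen isOpen_Ioi (by simp)

lemma IsPhiMu.hasDerivAt_deriv (h : IsPhiMu μ C φ) {r : ℝ} (hr : 0 < r) :
    HasDerivAt (deriv φ) (deriv (deriv φ) r) r :=
  ((h.contDiffOn_deriv.differentiableOn (by simp)).differentiableAt (Ioi_mem_nhds hr)).hasDerivAt

lemma IsPhiMu.continuousOn_deriv2 (h : IsPhiMu μ C φ) :
    ContinuousOn (deriv (deriv φ)) (Set.Ioi 0) :=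
  (h.contDiffOn_deriv.deriv_of_isOpen (m := (⊤ : ℕ∞)) isOpen_Ioi (by simp)).continuousOn

lemma IsPhiMu.deriv_near (h : IsPhiMu μ C φ) {r : ℝ} (hr : r ∈ Set.Ioo (0 : ℝ) (3 / 4)) :
    deriv φ r = 1 := by
  have : φ =ᶠ[nhds r] id := by
    filter_upwards [isOpen_Ioo.mem_nhds hr] with s hs using h.2.2.1 s hs
  rw [this.deriv_eq]; simp

lemma IsPhiMu.deriv2_near (h : IsPhiMu μ C φ) {r : ℝ} (hr : r ∈ Set.Ioo (0 : ℝ) (3 / 4)) :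
    deriv (deriv φ) r = 0 := by
  have : deriv φ =ᶠ[nhds r] fun _ => 1 := by
    filter_upwards [isOpen_Ioo.mem_nhds hr] with s hs using h.deriv_near hs
  rw [this.deriv_eq]; simp

lemma IsPhiMu.far (h : IsPhiMu μ C φ) {r : ℝ} (hr : 1 < r) :
    φ r = r ^ (-μ) * (1 + C / r ^ 2) := by
  have h0 : 0 < r := by linarith
  rw [h.2.2.2 r hr, Real.rpow_sub h0, Real.rpow_two]; field_simp

lemma IsPhiMu.deriv_far (h : IsPhiMu μ C φ) {r : ℝ} (hr : 1 < r) :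
    deriv φ r = -(r ^ (-μ) / r * (μ + (μ + 2) * C / r ^ 2)) := by
  have h0 : 0 < r := by linarith
  have : φ =ᶠ[nhds r] fun s => s ^ (-μ) + C * s ^ (-μ - 2) := by
    filter_upwards [Ioi_mem_nhds hr] with s hs using h.2.2.2 s hs
  rw [this.deriv_eq]
  have h1 := (Real.hasDerivAt_rpow_const (x := r) (p := -μ) (Or.inl h0.ne')).add
    ((Real.hasDerivAt_rpow_const (x := r) (p := -μ - 2) (Or.inl h0.ne')).const_mul C)
  refine h1.deriv.trans ?_
  rw [Real.rpow_sub h0, Real.rpow_sub h0, Real.rpow_sub h0, Real.rpow_two, Real.rpow_one]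
  field_simp; ring

lemma IsPhiMu.deriv2_far (h : IsPhiMu μ C φ) {r : ℝ} (hr : 1 < r) :
    deriv (deriv φ) r = r ^ (-μ) / r ^ 2 * (μ * (μ + 1) + (μ + 2) * (μ + 3) * C / r ^ 2) := by
  have h0 : 0 < r := by linarith
  have : deriv φ =ᶠ[nhds r] fun s => (-μ) * s ^ (-μ - 1) + (-μ - 2) * C * s ^ (-μ - 3) := by
    filter_upwards [Ioi_mem_nhds hr] with s hs
    have hs0 : (0 : ℝ) < s := lt_trans one_pos hs
    rw [h.deriv_far hs, Real.rpow_sub hs0, Real.rpow_sub hs0, Real.rpow_one,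
      show (3 : ℝ) = ((3 : ℕ) : ℝ) by norm_num, Real.rpow_natCast]
    field_simp; ring
  rw [this.deriv_eq]
  have h1 := ((Real.hasDerivAt_rpow_const (x := r) (p := -μ - 1) (Or.inl h0.ne')).const_mul (-μ)).add
    ((Real.hasDerivAt_rpow_const (x := r) (p := -μ - 3) (Or.inl h0.ne')).const_mul ((-μ - 2) * C))
  refine h1.deriv.trans ?_
  rw [show -μ - 1 - 1 = -μ - 2 by ring, show -μ - 3 - 1 = -μ - (4 : ℕ) by norm_num; ring,
    Real.rpow_sub h0, Real.rpow_sub h0, Real.rpow_two, Real.rpow_natCast]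
  field_simp; ring

/-- The logarithmic derivative `P = r φ'/φ`. -/
def logP (φ : ℝ → ℝ) (r : ℝ) : ℝ := r * deriv φ r / φ r

/-- The second-order analogue `Q = r² φ''/φ` of `logP`. -/
def logQ (φ : ℝ → ℝ) (r : ℝ) : ℝ := r ^ 2 * deriv (deriv φ) r / φ r

lemma IsPhiMu.logP_continuousOn (h : IsPhiMu μ C φ) : ContinuousOn (logP φ) (Set.Ioi 0) :=
  (continuousOn_id.mul h.contDiffOn_deriv.continuousOn).div h.2.1.continuousOn
    (fun r hr => (h.1 r hr).ne')

lemma IsPhiMu.logQ_continuousOn (h : IsPhiMu μ C φ) : ContinuousOn (logQ φ) (Set.Ioi 0) :=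
  ((continuousOn_id.pow 2).mul h.continuousOn_deriv2).div h.2.1.continuousOn
    (fun r hr => (h.1 r hr).ne')

lemma IsPhiMu.logP_near (h : IsPhiMu μ C φ) {r : ℝ} (hr : r ∈ Set.Ioo (0 : ℝ) (3 / 4)) :
    logP φ r = 1 := by
  have := hr.1.ne'
  rw [logP, h.deriv_near hr, h.2.2.1 r hr]; field_simp

lemma IsPhiMu.logP_far (h : IsPhiMu μ C φ) (hC : 0 ≤ C) {r : ℝ} (hr : 1 < r) :
    logP φ r = -μ - 2 * C / (r ^ 2 + C) := by
  have h0 : 0 < r := by linarith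
  have h1 : 0 < r ^ (-μ) := Real.rpow_pos_of_pos h0 _
  have h2 : 0 < r ^ 2 + C := by positivity
  rw [logP, h.deriv_far hr, h.far hr]; field_simp; ring

lemma IsPhiMu.logQ_far (h : IsPhiMu μ C φ) (hC : 0 ≤ C) {r : ℝ} (hr : 1 < r) :
    logQ φ r = (μ * (μ + 1) * r ^ 2 + (μ + 2) * (μ + 3) * C) / (r ^ 2 + C) := by
  have h0 : 0 < r := by linarith
  have h1 : 0 < r ^ (-μ) := Real.rpow_pos_of_pos h0 _
  have h2 : 0 < r ^ 2 + C := by positivity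
  rw [logQ, h.deriv2_far hr, h.far hr]; field_simp

lemma IsPhiMu.logP_bounded (h : IsPhiMu μ C φ) (hμ : 0 ≤ μ) (hC : 0 ≤ C) :
    ∃ M, ∀ r > (0 : ℝ), |logP φ r| ≤ M := by
  refine bounded_of_ends _ h.logP_continuousOn ⟨1, fun r hr => by simp [h.logP_near hr]⟩
    ⟨μ + 2, fun r hr => ?_⟩
  rw [h.logP_far hC (by linarith)]
  have h2 : 0 < r ^ 2 + C := by positivity
  have h3 : 2 * C / (r ^ 2 + C) ≤ 2 := by rw [div_le_iff₀ h2]; nlinarith [sq_nonneg r]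
  have h4 : 0 ≤ 2 * C / (r ^ 2 + C) := by positivity
  rw [abs_le]; constructor <;> linarith

lemma IsPhiMu.logQ_bounded (h : IsPhiMu μ C φ) (hμ : 0 ≤ μ) (hC : 0 ≤ C) :
    ∃ M, ∀ r > (0 : ℝ), |logQ φ r| ≤ M := by
  refine bounded_of_ends _ h.logQ_continuousOn
    ⟨0, fun r hr => by simp [logQ, h.deriv2_near hr]⟩ ⟨(μ + 2) * (μ + 3), fun r hr => ?_⟩
  rw [h.logQ_far hC (by linarith)]
  have h2 : 0 < r ^ 2 + C := by positivity
  rw [abs_of_nonneg (by positivity), div_le_iff₀ h2]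
  nlinarith [mul_nonneg hμ (sq_nonneg r), sq_nonneg r]

/-- `P → -μ` at infinity so fast that `r² (P + μ)` stays bounded. -/
lemma IsPhiMu.sq_mul_bounded (h : IsPhiMu μ C φ) (hμ : 0 ≤ μ) (hC : 0 ≤ C) :
    ∃ M, ∀ r > (0 : ℝ), |r ^ 2 * (2 * μ + 2 * logP φ r)| ≤ M := by
  refine bounded_of_ends _ ((continuousOn_id.pow 2).mul
    (continuousOn_const.add (continuousOn_const.mul h.logP_continuousOn)))
    ⟨2 * μ + 2, fun r hr => ?_⟩ ⟨4 * C, fun r hr => ?_⟩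
  · rw [h.logP_near hr, abs_of_nonneg (by positivity)]
    have : r ^ 2 ≤ 1 := by have := hr.1; have := hr.2; nlinarith
    nlinarith
  · rw [h.logP_far hC (by linarith)]
    have h2 : 0 < r ^ 2 + C := by positivity
    have e : r ^ 2 * (2 * μ + 2 * (-μ - 2 * C / (r ^ 2 + C))) = -(4 * C * r ^ 2 / (r ^ 2 + C)) := by
      field_simp; ring
    rw [e, abs_neg, abs_of_nonneg (by positivity), div_le_iff₀ h2]
    nlinarith [mul_nonneg hC hC]

end

/-! ### Formulas for `β_φ` and `γ` -/

section
variable {n : ℕ} {μ C α : ℝ} {φ : ℝ → ℝ}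

lemma rpow_shift {r : ℝ} (hr : 0 < r) (n : ℕ) :
    r ^ ((n : ℝ) - 1) = r ^ ((n : ℝ) - 2) * r ∧ r ^ ((n : ℝ) - 3) = r ^ ((n : ℝ) - 2) / r := by
  constructor
  · rw [show (n : ℝ) - 1 = ((n : ℝ) - 2) + 1 by ring, Real.rpow_add_one hr.ne']
  · rw [show (n : ℝ) - 3 = ((n : ℝ) - 2) - 1 by ring, Real.rpow_sub_one hr.ne']

lemma rpow_continuousOn (p : ℝ) : ContinuousOn (fun s : ℝ => s ^ p) (Set.Ioi 0) :=
  continuousOn_id.rpow_const (fun _ hs => Or.inl (ne_of_gt hs))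

lemma factsA (h : IsPhiMu μ C φ) :
    (∀ r ∈ Set.Ioo (0 : ℝ) (3 / 4), ∫ s in Set.Ioc (0 : ℝ) r, (φ s) ^ 2 * s ^ ((n : ℝ) - 1) =
      r ^ ((n : ℝ) + 1 + 1) / ((n : ℝ) + 1 + 1)) ∧
    (∀ r > 0, HasDerivAt (fun r => ∫ s in Set.Ioc (0 : ℝ) r, (φ s) ^ 2 * s ^ ((n : ℝ) - 1))
      ((φ r) ^ 2 * r ^ ((n : ℝ) - 1)) r) := by
  refine primitive_facts _ _ (by positivity)
    ((h.2.1.continuousOn.pow 2).mul (rpow_continuousOn _)) fun s hs => ?_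
  rw [h.2.2.1 s hs, ← Real.rpow_two, ← Real.rpow_add hs.1]; ring_nf

lemma factsB (hn : 2 ≤ n) (h : IsPhiMu μ C φ) :
    (∀ r ∈ Set.Ioo (0 : ℝ) (3 / 4), ∫ s in Set.Ioc (0 : ℝ) r, (φ s) ^ 2 * s ^ ((n : ℝ) - 3) =
      r ^ ((n : ℝ) - 1 + 1) / ((n : ℝ) - 1 + 1)) ∧
    (∀ r > 0, HasDerivAt (fun r => ∫ s in Set.Ioc (0 : ℝ) r, (φ s) ^ 2 * s ^ ((n : ℝ) - 3))
      ((φ r) ^ 2 * r ^ ((n : ℝ) - 3)) r) := by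
  have hn' : (2 : ℝ) ≤ n := by exact_mod_cast hn
  refine primitive_facts _ _ (by linarith)
    ((h.2.1.continuousOn.pow 2).mul (rpow_continuousOn _)) fun s hs => ?_
  rw [h.2.2.1 s hs, ← Real.rpow_two, ← Real.rpow_add hs.1]; ring_nf

lemma factsD (hn : 2 ≤ n) (h : IsPhiMu μ C φ) :
    (∀ r ∈ Set.Ioo (0 : ℝ) (3 / 4), ∫ s in Set.Ioc (0 : ℝ) r, (deriv φ s) ^ 2 * s ^ ((n : ℝ) - 1) =
      r ^ ((n : ℝ) - 1 + 1) / ((n : ℝ) - 1 + 1)) ∧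
    (∀ r > 0, HasDerivAt (fun r => ∫ s in Set.Ioc (0 : ℝ) r, (deriv φ s) ^ 2 * s ^ ((n : ℝ) - 1))
      ((deriv φ r) ^ 2 * r ^ ((n : ℝ) - 1)) r) := by
  have hn' : (2 : ℝ) ≤ n := by exact_mod_cast hn
  refine primitive_facts _ _ (by linarith)
    ((h.contDiffOn_deriv.continuousOn.pow 2).mul (rpow_continuousOn _)) fun s hs => ?_
  rw [h.deriv_near hs]; ring

/-- Derivative of the weight `w = r^{n-2} φ²`, in the form `w' = w (n - 2 + 2P) / r`. -/
lemma hasDerivAt_weight (h : IsPhiMu μ C φ) {r : ℝ} (hr : 0 < r) :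
    HasDerivAt (fun s => s ^ ((n : ℝ) - 2) * (φ s) ^ 2)
      (r ^ ((n : ℝ) - 2) * (φ r) ^ 2 * ((n : ℝ) - 2 + 2 * logP φ r) / r) r := by
  have h1 := (Real.hasDerivAt_rpow_const (x := r) (p := (n : ℝ) - 2) (Or.inl hr.ne')).mul
    ((h.hasDerivAt hr).pow 2)
  refine h1.congr_deriv ?_
  have := (h.1 r hr).ne'
  rw [Real.rpow_sub_one hr.ne', logP]
  simp only [Pi.pow_apply]
  push_cast
  field_simp

/-- Under `2μ = n - 2` the function `β_φ` is differentiable, and `r β'` is a polynomial expression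
in `β`, `P`, `Q` and `r² (n - 2 + 2P)`: the integrals enter only through `β` itself. -/
lemma hasDerivAt_beta (hn : 2 ≤ n) (hμn : 2 * μ = (n : ℝ) - 2) (h : IsPhiMu μ C φ)
    {r : ℝ} (hr : 0 < r) :
    HasDerivAt (betaPhi n μ α φ)
      ((r ^ 2 * (2 * μ + 2 * logP φ r) / 4 + n * α + α * logP φ r ^ 2
        - α * ((2 * μ + 2 * logP φ r) * logP φ r + logP φ r + logQ φ r - logP φ r ^ 2)
        - (2 * μ + 2 * logP φ r) * betaPhi n μ α φ r) / r) r := by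
  have hφ := (h.1 r hr).ne'
  have hT : r ^ ((n : ℝ) - 2) ≠ 0 := (Real.rpow_pos_of_pos hr _).ne'
  have hw := (hasDerivAt_weight (n := n) h hr).inv (mul_ne_zero hT (pow_ne_zero 2 hφ))
  have hA := (factsA (n := n) h).2 r hr
  have hB := (factsB hn h).2 r hr
  have hD := (factsD hn h).2 r hr
  have h1 := (((((hasDerivAt_id r).pow 2).add ((hw.const_mul (2 * μ - n)).mul hA)).const_mul
    (1 / 4)).add ((hw.const_mul (n * α)).mul hB)).add ((hw.const_mul α).mul hD)
  have h2 := h1.sub ((((hasDerivAt_id r).const_mul α).mul (h.hasDerivAt_deriv hr)).div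
    (h.hasDerivAt hr) hφ)
  refine h2.congr_deriv ?_
  simp only [betaPhi, logP, logQ, Pi.mul_apply, Pi.inv_apply, id]
  obtain ⟨e1, e2⟩ := rpow_shift hr n
  -- the integrals are generalized first, so that `e1`, `e2` are used only outside of them
  generalize (∫ s in Set.Ioc (0 : ℝ) r, (φ s) ^ 2 * s ^ ((n : ℝ) - 1)) = A
  generalize (∫ s in Set.Ioc (0 : ℝ) r, (φ s) ^ 2 * s ^ ((n : ℝ) - 3)) = B
  generalize (∫ s in Set.Ioc (0 : ℝ) r, (deriv φ s) ^ 2 * s ^ ((n : ℝ) - 1)) = D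
  rw [e1, e2]
  generalize r ^ ((n : ℝ) - 2) = T at *
  have e3 : (n : ℝ) = 2 * μ + 2 := by linarith
  rw [e3]
  push_cast
  field_simp
  ring

/-- `γ` is a polynomial expression in `P`, `Q`, `β` and `r β'`. -/
lemma gamma_eq (hn : 2 ≤ n) (hμn : 2 * μ = (n : ℝ) - 2) (h : IsPhiMu μ C φ)
    {r : ℝ} (hr : 0 < r) {β : ℝ → ℝ} {b : ℝ} (hβ : HasDerivAt β (b / r) r) :
    gammaOf n α φ β r = (-α * (2 * μ + 2 * logP φ r) + b * logP φ r + β r * logQ φ r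
      + (2 * μ + 1) * (β r * logP φ r) - β r) / (2 * μ + 1) := by
  have hφ := (h.1 r hr).ne'
  have hT : r ^ ((n : ℝ) - 2) ≠ 0 := (Real.rpow_pos_of_pos hr _).ne'
  have h1 := ((Real.hasDerivAt_rpow_const (x := r) (p := (n : ℝ) - 1) (Or.inl hr.ne')).mul
    hβ).mul (h.hasDerivAt_deriv hr)
  have h1' : deriv (fun s => s ^ ((n : ℝ) - 1) * β s * deriv φ s) r = _ := h1.deriv
  have hn' : (2 : ℝ) ≤ n := by exact_mod_cast hn
  have hm : 2 * μ + 1 ≠ 0 := by linarith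
  rw [gammaOf, (hasDerivAt_weight (n := n) h hr).deriv, h1',
    show (n : ℝ) - 1 - 1 = (n : ℝ) - 2 by ring]
  simp only [logP, logQ, Pi.mul_apply]
  rw [(rpow_shift hr n).1]
  generalize r ^ ((n : ℝ) - 2) = T at *
  have e3 : (n : ℝ) = 2 * μ + 2 := by linarith
  rw [e3, show 2 * μ + 2 - 1 = 2 * μ + 1 by ring]
  field_simp
  ring

lemma beta_near (hn : 2 ≤ n) (hμn : 2 * μ = (n : ℝ) - 2) (h : IsPhiMu μ C φ)
    {r : ℝ} (hr : r ∈ Set.Ioo (0 : ℝ) (3 / 4)) :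
    betaPhi n μ α φ r = n / (4 * (n + 2)) * r ^ 2 + α / n := by
  have hr0 := hr.1
  have hn' : (2 : ℝ) ≤ n := by exact_mod_cast hn
  have hn0 : (n : ℝ) ≠ 0 := by linarith
  have hn2 : (n : ℝ) + 2 ≠ 0 := by linarith
  rw [betaPhi, (factsA h).1 r hr, (factsB hn h).1 r hr, (factsD hn h).1 r hr, h.deriv_near hr,
    h.2.2.1 r hr, hμn]
  have e1 : r ^ ((n : ℝ) - 2) = r ^ (n : ℝ) / r ^ 2 := by
    rw [Real.rpow_sub hr0, Real.rpow_two]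
  have e2 : r ^ ((n : ℝ) + 1 + 1) = r ^ (n : ℝ) * r ^ 2 := by
    rw [add_assoc, Real.rpow_add hr0, one_add_one_eq_two, Real.rpow_two]
  have e3 : (n : ℝ) - 1 + 1 = n := by ring
  rw [e1, e2, e3, show (n : ℝ) + 1 + 1 = n + 2 by ring]
  have hT : r ^ (n : ℝ) ≠ 0 := (Real.rpow_pos_of_pos hr0 _).ne'
  generalize r ^ (n : ℝ) = T at *
  field_simp
  ring

/-! ### Behaviour of `β_φ` at infinity -/

/-- On `(3/2, ∞)` an integral based at `0` differs by a constant from any explicit primitive. -/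
lemma primitive_far {F G f g : ℝ → ℝ} (hF : ∀ r > 0, HasDerivAt F (f r) r)
    (hG : ∀ r > (1 : ℝ), HasDerivAt G (g r) r) (hfg : ∀ r > (1 : ℝ), f r = g r) :
    ∃ c, ∀ r > (3 / 2 : ℝ), F r = G r + c := by
  refine ⟨F (3 / 2) - G (3 / 2), fun r hr => ?_⟩
  have hd : ∀ x ∈ Set.Ioi (1 : ℝ), HasDerivAt (F - G) 0 x := fun x hx =>
    ((hF x (lt_trans one_pos hx)).sub (hG x hx)).congr_deriv (by rw [hfg x hx, sub_self])
  have := isOpen_Ioi.is_const_of_deriv_eq_zero (convex_Ioi (1 : ℝ)).isPreconnected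
    (f := F - G) (fun x hx => (hd x hx).differentiableAt.differentiableWithinAt)
    (fun x hx => (hd x hx).deriv) (show r ∈ Set.Ioi (1 : ℝ) by simp; linarith)
    (show (3 / 2 : ℝ) ∈ Set.Ioi (1 : ℝ) by simp; norm_num)
  simp only [Pi.sub_apply] at this
  linarith

/-- Explicit primitive of `a/s + b/s³ + c/s⁵`. -/
lemma hasDerivAt_prim (a b c : ℝ) {r : ℝ} (hr : 1 < r) :
    HasDerivAt (fun s => a * Real.log s - b / 2 * (s ^ 2)⁻¹ - c / 4 * (s ^ 4)⁻¹)
      (a / r + b / r ^ 3 + c / r ^ 5) r := by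
  have h0 : r ≠ 0 := by linarith
  have := (((Real.hasDerivAt_log h0).const_mul a).sub
    (((hasDerivAt_pow 2 r).inv (pow_ne_zero 2 h0)).const_mul (b / 2))).sub
    (((hasDerivAt_pow 4 r).inv (pow_ne_zero 4 h0)).const_mul (c / 4))
  refine this.congr_deriv ?_
  push_cast
  field_simp
  ring

lemma beta_far (hn : 2 ≤ n) (hμn : 2 * μ = (n : ℝ) - 2)
    (hC : 0 ≤ C) (h : IsPhiMu μ C φ) :
    ∃ M : ℝ, ∀ r > (3 / 2 : ℝ), |betaPhi n μ α φ r -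
      (-C + α * ((n : ℝ) + ((n : ℝ) - 2) ^ 2 / 4)) * Real.log r| ≤ M := by
  have e3 : (n : ℝ) = 2 * μ + 2 := by linarith
  have hsq : ∀ r > (1 : ℝ), r ^ ((n : ℝ) - 2) * (r ^ (-μ)) ^ 2 = 1 := by
    intro r hr
    have h0 : 0 < r := by linarith
    rw [← Real.rpow_natCast, ← Real.rpow_mul h0.le, ← Real.rpow_add h0, ← hμn]
    norm_num
    rw [show 2 * μ + -(μ * 2) = 0 by ring, Real.rpow_zero]
  obtain ⟨cA, hA⟩ := primitive_far (factsA (n := n) h).2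
    (G := fun s => s ^ 2 / 2 + (2 * C * Real.log s - C ^ 2 / 2 * (s ^ 2)⁻¹ - 0 / 4 * (s ^ 4)⁻¹))
    (g := fun r => r + (2 * C / r + C ^ 2 / r ^ 3 + 0 / r ^ 5))
    (fun r hr => (((hasDerivAt_pow 2 r).div_const 2).add (hasDerivAt_prim _ _ _ hr)).congr_deriv
      (by norm_num))
    (by
      intro r hr
      have h0 : 0 < r := by linarith
      calc _ = (r ^ ((n : ℝ) - 2) * (r ^ (-μ)) ^ 2) * ((1 + C / r ^ 2) ^ 2 * r) := by
            rw [h.far hr, (rpow_shift h0 n).1]; ring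
        _ = _ := by rw [hsq r hr]; field_simp; ring)
  obtain ⟨cB, hB⟩ := primitive_far (factsB hn h).2
    (fun r hr => hasDerivAt_prim 1 (2 * C) (C ^ 2) hr)
    (by
      intro r hr
      have h0 : 0 < r := by linarith
      calc _ = (r ^ ((n : ℝ) - 2) * (r ^ (-μ)) ^ 2) * ((1 + C / r ^ 2) ^ 2 / r) := by
            rw [h.far hr, (rpow_shift h0 n).2]; ring
        _ = _ := by rw [hsq r hr]; field_simp; ring)
  obtain ⟨cD, hD⟩ := primitive_far (factsD hn h).2
    (fun r hr => hasDerivAt_prim (μ ^ 2) (2 * μ * (μ + 2) * C) ((μ + 2) ^ 2 * C ^ 2) hr)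
    (by
      intro r hr
      have h0 : 0 < r := by linarith
      calc _ = (r ^ ((n : ℝ) - 2) * (r ^ (-μ)) ^ 2) * ((μ + (μ + 2) * C / r ^ 2) ^ 2 / r) := by
            rw [h.deriv_far hr, (rpow_shift h0 n).1]; field_simp
        _ = _ := by rw [hsq r hr]; field_simp; ring)
  set K : ℝ := -C + α * ((n : ℝ) + ((n : ℝ) - 2) ^ 2 / 4) with hK
  -- with `x = r⁻²` and `q = 1 + C x`, so that `w = q²`, one has `q² β = K log r + (bounded)`
  have key : ∀ r > (3 / 2 : ℝ), betaPhi n μ α φ r - K * Real.log r =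
      ((1 + C * (r ^ 2)⁻¹) ^ 2)⁻¹ * (C / 2 - cA / 2 + n * α * cB + α * cD
        + (C ^ 2 / 2 - n * α * C - α * μ * (μ + 2) * C) * (r ^ 2)⁻¹
        - (n * α * C ^ 2 / 4 + α * (μ + 2) ^ 2 * C ^ 2 / 4) * (r ^ 4)⁻¹
        - K * (2 * C + C ^ 2 * (r ^ 2)⁻¹) * (Real.log r * (r ^ 2)⁻¹)) + α * (-logP φ r) := by
    intro r hr
    have h0 : 0 < r := by linarith
    have hq : 0 < r ^ 2 + C := by positivity
    have hw : r ^ ((n : ℝ) - 2) * (φ r) ^ 2 = (1 + C * (r ^ 2)⁻¹) ^ 2 := by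
      rw [h.far (by linarith), mul_pow, ← mul_assoc, hsq r (by linarith)]; ring
    rw [betaPhi, hA r hr, hB r hr, hD r hr, hw, hK, logP]
    rw [show α * r * deriv φ r / φ r = α * (r * deriv φ r / φ r) by ring]
    generalize r * deriv φ r / φ r = P
    generalize Real.log r = L
    rw [e3]
    field_simp
    ring
  obtain ⟨MP, hP⟩ : ∃ M, ∀ r > (3 / 2 : ℝ), |logP φ r| ≤ M := by
    refine ⟨|μ| + 2, fun r hr => ?_⟩
    rw [h.logP_far hC (by linarith)]
    have h2 : 0 < r ^ 2 + C := by positivity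
    have h3 : 2 * C / (r ^ 2 + C) ≤ 2 := by rw [div_le_iff₀ h2]; nlinarith [sq_nonneg r]
    have h4 : 0 ≤ 2 * C / (r ^ 2 + C) := by positivity
    have := le_abs_self μ
    have := neg_abs_le μ
    rw [abs_le]; constructor <;> linarith
  generalize hc0 : C / 2 - cA / 2 + n * α * cB + α * cD = c0 at key
  generalize C ^ 2 / 2 - n * α * C - α * μ * (μ + 2) * C = c1 at key
  generalize n * α * C ^ 2 / 4 + α * (μ + 2) ^ 2 * C ^ 2 / 4 = c2 at key
  refine ⟨|c0| + |c1| + |c2| + |K| * (2 * C + C ^ 2) + |α| * MP, fun r hr => ?_⟩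
  have h1 : 1 ≤ r := by linarith
  have h0 : 0 < r := by linarith
  have x0 : 0 ≤ (r ^ 2)⁻¹ := by positivity
  have x1 : (r ^ 2)⁻¹ ≤ 1 := inv_le_one_of_one_le₀ (one_le_pow₀ h1)
  have y0 : 0 ≤ (r ^ 4)⁻¹ := by positivity
  have y1 : (r ^ 4)⁻¹ ≤ 1 := inv_le_one_of_one_le₀ (one_le_pow₀ h1)
  have l0 : 0 ≤ Real.log r * (r ^ 2)⁻¹ := mul_nonneg (Real.log_nonneg h1) x0
  have l1 : Real.log r * (r ^ 2)⁻¹ ≤ 1 := by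
    rw [← div_eq_mul_inv, div_le_one (by positivity)]
    have := Real.log_le_sub_one_of_pos h0
    nlinarith
  have q0 : 0 ≤ ((1 + C * (r ^ 2)⁻¹) ^ 2)⁻¹ := by positivity
  have q1 : ((1 + C * (r ^ 2)⁻¹) ^ 2)⁻¹ ≤ 1 :=
    inv_le_one_of_one_le₀ (one_le_pow₀ (by nlinarith [mul_nonneg hC x0]))
  rw [key r hr]
  generalize (r ^ 4)⁻¹ = y at *
  generalize Real.log r * (r ^ 2)⁻¹ = l at *
  generalize ((1 + C * (r ^ 2)⁻¹) ^ 2)⁻¹ = q at *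
  generalize (r ^ 2)⁻¹ = x at *
  have b1 : |c1 * x| ≤ |c1| := by
    rw [abs_mul, abs_of_nonneg x0]; exact mul_le_of_le_one_right (abs_nonneg _) x1
  have b2 : |c2 * y| ≤ |c2| := by
    rw [abs_mul, abs_of_nonneg y0]; exact mul_le_of_le_one_right (abs_nonneg _) y1
  have b3 : |K * (2 * C + C ^ 2 * x) * l| ≤ |K| * (2 * C + C ^ 2) := by
    have hp : 0 ≤ 2 * C + C ^ 2 * x := by positivity
    rw [abs_mul, abs_mul, abs_of_nonneg l0, abs_of_nonneg hp]
    refine (mul_le_of_le_one_right (by positivity) l1).trans ?_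
    gcongr
    exact mul_le_of_le_one_right (by positivity) x1
  have b4 : |α * -logP φ r| ≤ |α| * MP := by
    rw [abs_mul, abs_neg]; gcongr; exact hP r hr
  refine (abs_add_le _ _).trans (add_le_add ?_ b4)
  rw [abs_mul, abs_of_nonneg q0]
  refine (mul_le_of_le_one_left (abs_nonneg _) q1).trans ?_
  have t1 := abs_sub (c0 + c1 * x - c2 * y) (K * (2 * C + C ^ 2 * x) * l)
  have t2 := abs_sub (c0 + c1 * x) (c2 * y)
  have t3 := abs_add_le c0 (c1 * x)
  linarith

end

/-! ### The algebra of bounded functions -/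

/-- Boundedness on `(0,∞)`. -/
def Bdd (f : ℝ → ℝ) : Prop := ∃ M : ℝ, ∀ r > (0 : ℝ), |f r| ≤ M

lemma Bdd.const (c : ℝ) : Bdd (fun _ => c) := ⟨|c|, fun _ _ => le_rfl⟩

lemma Bdd.add {f g : ℝ → ℝ} (hf : Bdd f) (hg : Bdd g) : Bdd (fun r => f r + g r) := by
  obtain ⟨M, hM⟩ := hf
  obtain ⟨N, hN⟩ := hg
  exact ⟨M + N, fun r hr => (abs_add_le _ _).trans (add_le_add (hM r hr) (hN r hr))⟩

lemma Bdd.mul {f g : ℝ → ℝ} (hf : Bdd f) (hg : Bdd g) : Bdd (fun r => f r * g r) := by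
  obtain ⟨M, hM⟩ := hf
  obtain ⟨N, hN⟩ := hg
  refine ⟨M * N, fun r hr => ?_⟩
  rw [abs_mul]
  exact mul_le_mul (hM r hr) (hN r hr) (abs_nonneg _) ((abs_nonneg _).trans (hM r hr))

lemma Bdd.sub {f g : ℝ → ℝ} (hf : Bdd f) (hg : Bdd g) : Bdd (fun r => f r - g r) := by
  obtain ⟨M, hM⟩ := hf
  obtain ⟨N, hN⟩ := hg
  exact ⟨M + N, fun r hr => (abs_sub _ _).trans (add_le_add (hM r hr) (hN r hr))⟩

/-- Case `2μ = n-2`: with `C_μ = (n + (n-2)²/4)α`, `β := β_φ` and the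
corresponding `γ` are bounded on `(0,∞)`; moreover, for an arbitrary `C_μ ≥ 0`,
`β_φ(r) = (-C_μ + α(n + (n-2)²/4)) log r + R(r)` with `R` bounded on `(3/2, ∞)`. -/
theorem stmt_9 (n : ℕ) (hn : 2 ≤ n) (μ : ℝ) (hμ : 0 ≤ μ) (hμn : 2 * μ = (n : ℝ) - 2)
    (α : ℝ) (hα : 0 < α) :
    (∀ φ : ℝ → ℝ, IsPhiMu μ (((n : ℝ) + ((n : ℝ) - 2) ^ 2 / 4) * α) φ →
      (∃ M : ℝ, ∀ r > (0:ℝ), |betaPhi n μ α φ r| ≤ M) ∧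
      (∃ M : ℝ, ∀ r > (0:ℝ), |gammaOf n α φ (betaPhi n μ α φ) r| ≤ M)) ∧
    (∀ Cμ : ℝ, 0 ≤ Cμ → ∀ φ : ℝ → ℝ, IsPhiMu μ Cμ φ →
      ∃ R : ℝ → ℝ, (∃ M : ℝ, ∀ r > (3 / 2 : ℝ), |R r| ≤ M) ∧
        ∀ r > (3 / 2 : ℝ),
          betaPhi n μ α φ r =
            (-Cμ + α * ((n : ℝ) + ((n : ℝ) - 2) ^ 2 / 4)) * Real.log r + R r) := by

  refine ⟨fun φ h => ?_, fun C hC φ h => ?_⟩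
  · have hC : 0 ≤ ((n : ℝ) + ((n : ℝ) - 2) ^ 2 / 4) * α := by positivity
    have hβ : Bdd (betaPhi n μ α φ) := by
      refine bounded_of_ends _ (fun r hr =>
        (hasDerivAt_beta hn hμn h hr).continuousAt.continuousWithinAt)
        ⟨(n / (4 * (n + 2))) + α / n, fun r hr => ?_⟩ ?_
      · rw [beta_near hn hμn h hr, abs_of_nonneg (by positivity)]
        have : r ^ 2 ≤ 1 := by have := hr.1; have := hr.2; nlinarith
        gcongr
        exact mul_le_of_le_one_right (by positivity) this
      · -- the choice of the constant `C_μ` kills the logarithm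
        obtain ⟨M, hM⟩ := beta_far (α := α) hn hμn hC h
        refine ⟨M, fun r hr => ?_⟩
        have := hM r hr
        rwa [show -(((n : ℝ) + ((n : ℝ) - 2) ^ 2 / 4) * α) +
          α * ((n : ℝ) + ((n : ℝ) - 2) ^ 2 / 4) = 0 by ring, zero_mul, sub_zero] at this
    refine ⟨hβ, ?_⟩
    have hP : Bdd (logP φ) := h.logP_bounded hμ hC
    have hQ : Bdd (logQ φ) := h.logQ_bounded hμ hC
    have hU : Bdd (fun r => r ^ 2 * (2 * μ + 2 * logP φ r)) := h.sq_mul_bounded hμ hC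
    have hu : Bdd (fun r => 2 * μ + 2 * logP φ r) := (Bdd.const _).add ((Bdd.const _).mul hP)
    have hb : Bdd (fun r => r ^ 2 * (2 * μ + 2 * logP φ r) * (1 / 4) + n * α
        + α * (logP φ r * logP φ r)
        - α * ((2 * μ + 2 * logP φ r) * logP φ r + logP φ r + logQ φ r - logP φ r * logP φ r)
        - (2 * μ + 2 * logP φ r) * betaPhi n μ α φ r) :=
      ((((hU.mul (.const _)).add (.const _)).add ((Bdd.const _).mul (hP.mul hP))).sub
        ((Bdd.const _).mul ((((hu.mul hP).add hP).add hQ).sub (hP.mul hP)))).sub (hu.mul hβ)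
    have hγ := ((((((Bdd.const (-α)).mul hu).add (hb.mul hP)).add (hβ.mul hQ)).add
      ((Bdd.const (2 * μ + 1)).mul (hβ.mul hP))).sub hβ).mul (.const (2 * μ + 1)⁻¹)
    obtain ⟨M, hM⟩ := hγ
    refine ⟨M, fun r hr => ?_⟩
    rw [gamma_eq hn hμn h hr (hasDerivAt_beta hn hμn h hr)]
    convert hM r hr using 2
    ring
  · obtain ⟨M, hM⟩ := beta_far (α := α) hn hμn hC h
    exact ⟨fun r => betaPhi n μ α φ r - _ * Real.log r, ⟨M, hM⟩, fun r _ => by ring⟩
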